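/- Let H be a real Hilbert space and β > 0. Let f : H → ℝ be convex with a gradient map f' : H → H (f has gradient f'(x) at every x ∈ H) such that f' is Lipschitz with constant 1/β, and let g : H → ℝ be convex and lower semicontinuous. Suppose the set Ω of minimizers of f + g is nonempty. Assume the variable-metric hypotheses of the context: operators U_k, V_k with ⟨U_k x, x⟩ ≥ α‖x‖² (α > 0), V_k∘U_k = U_k∘V_k = id, ‖U_k‖ ≤ μ, (1 + η_k)⟨U_{k+1}x, x⟩ ≥ ⟨U_k x, x⟩ with η_k ≥ 0 summable; parameters γ_k ∈ (0, 2β/‖U_k‖), α_k := 2β/(4β − γ_k‖U_k‖), λ_k ∈ (0, 1/α_k) with λ̲ ≤ λ_k ≤ 1/α_k − τ (λ̲, τ > 0) and γ_k ≥ γ̲ > 0; errors a_k, b_k with ∑_k λ_k‖a_k‖ < ∞, ∑_k λ_k‖b_k‖ < ∞; and proximal maps P_k : H → H satisfying, for all y, z ∈ H, γ_k·g(z) ≥ γ_k·g(P_k y) + ⟨V_k(y − P_k y), z − P_k y⟩. Define from x_0 ∈ H the iteration x_{k+1} = x_k + λ_k·(P_k(x_k − γ_k·U_k(f'(x_k)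 + b_k)) + a_k − x_k). Then there exists p ∈ Ω such that x_k converges weakly to p, i.e., ⟨x_k, y⟩ → ⟨p, y⟩ for every y ∈ H. -/

import Mathlib

open RealInnerProductSpace Filter

/-!
Let `y k` be the exact proximal gradient step from `x k`. By the Baillon–Haddad theorem `f'` is
`β`-cocoercive; together with the monotonicity of the subdifferential of `g` this shows that the
relaxed step `x k + lam k • (y k - x k)` is closer to every minimizer `z` than `x k` in the metric
`V k`, with a gain proportional to `⟪V k (x k - y k), x k - y k⟫`. The errors and the growth of the
metrics are summable, so `⟪V k (x k - z), x k - z⟫` converges and `x k - y k → 0`. The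
subgradient `f' (y k) + (γ k)⁻¹ • V k (x k - y k) - f' (x k)` of `f + g` at `y k` then tends to `0`,
so every weak cluster point of `x` minimizes `f + g`.

Divided by the growth factors `∏ j < k, (1 + η j)`, the operators `V k` become a decreasing sequence
of positive operators, so they converge strongly. Hence `⟪x k, V k (p - q)⟫` converges for
minimizers `p` and `q`, and comparing its limits along two subsequences `x ⇀ p` and `x ⇀ q` gives
`p = q`, as in Opial's lemma.
-/

open scoped Topology

section RealSequences

lemma summable_mul_of_nonneg {s t : ℕ → ℝ} (hs₀ : ∀ k, 0 ≤ s k) (ht₀ : ∀ k, 0 ≤ t k)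
    (hs : Summable s) (ht : Summable t) : Summable fun k => s k * t k :=
  (hs.mul_of_nonneg ht hs₀ ht₀).comp_injective (i := fun k => (k, k))
    fun _ _ h => congrArg Prod.fst h

/-- The partial products `∏ j < k, (1 + s j)`. Dividing by them turns a recursion with factors
`1 + s k` into a monotone one. -/
def growthFactor (s : ℕ → ℝ) (k : ℕ) : ℝ :=
  ∏ j ∈ Finset.range k, (1 + s j)

lemma growthFactor_succ (s : ℕ → ℝ) (k : ℕ) :
    growthFactor s (k + 1) = (1 + s k) * growthFactor s k := by
  rw [growthFactor, Finset.prod_range_succ, mul_comm, growthFactor]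

lemma one_le_growthFactor {s : ℕ → ℝ} (hs₀ : ∀ k, 0 ≤ s k) (k : ℕ) : 1 ≤ growthFactor s k :=
  Finset.one_le_prod fun j _ => le_add_of_nonneg_right (hs₀ j)

lemma exists_tendsto_growthFactor {s : ℕ → ℝ} (hs : Summable s) :
    ∃ q, Tendsto (growthFactor s) atTop (𝓝 q) :=
  ⟨_, (Real.multipliable_one_add_of_summable hs).hasProd.tendsto_prod_nat⟩

lemma div_growthFactor_succ_le {A s t : ℕ → ℝ} (hs₀ : ∀ k, 0 ≤ s k) (ht₀ : ∀ k, 0 ≤ t k)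
    (hA : ∀ k, A (k + 1) ≤ (1 + s k) * A k + t k) (k : ℕ) :
    A (k + 1) / growthFactor s (k + 1) ≤ A k / growthFactor s k + t k := by
  have hpos : 0 < growthFactor s k := one_pos.trans_le (one_le_growthFactor hs₀ k)
  have hone : 1 ≤ growthFactor s (k + 1) := one_le_growthFactor hs₀ (k + 1)
  rw [div_le_iff₀ (one_pos.trans_le hone)]
  calc A (k + 1) ≤ (1 + s k) * A k + t k * 1 := by simpa using hA k
    _ ≤ (1 + s k) * A k + t k * growthFactor s (k + 1) := by gcongr; exact ht₀ k
    _ = (A k / growthFactor s k + t k) * growthFactor s (k + 1) := by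
      rw [growthFactor_succ]; field_simp

lemma exists_tendsto_of_le_one_add_mul_add {A s t : ℕ → ℝ} (hA₀ : ∀ k, 0 ≤ A k)
    (hs₀ : ∀ k, 0 ≤ s k) (ht₀ : ∀ k, 0 ≤ t k) (hs : Summable s) (ht : Summable t)
    (hA : ∀ k, A (k + 1) ≤ (1 + s k) * A k + t k) : ∃ L, Tendsto A atTop (𝓝 L) := by
  let D : ℕ → ℝ := fun k => A k / growthFactor s k - ∑ j ∈ Finset.range k, t j
  have hQ : ∀ k, 0 < growthFactor s k := fun k => one_pos.trans_le (one_le_growthFactor hs₀ k)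
  have hanti : Antitone D := antitone_nat_of_succ_le fun k => by
    have := div_growthFactor_succ_le hs₀ ht₀ hA k
    simp only [D, Finset.sum_range_succ]
    linarith
  have hbdd : BddBelow (Set.range D) := by
    refine ⟨-∑' j, t j, ?_⟩
    rintro _ ⟨k, rfl⟩
    have := ht.sum_le_tsum (Finset.range k) fun j _ => ht₀ j
    have := div_nonneg (hA₀ k) (hQ k).le
    simp only [D]
    linarith
  obtain ⟨q, hq⟩ := exists_tendsto_growthFactor hs
  refine ⟨_, (((tendsto_atTop_ciInf hanti hbdd).add ht.hasSum.tendsto_sum_nat).mul hq).congr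
    fun k => ?_⟩
  simp only [D, sub_add_cancel, div_mul_cancel₀ _ (hQ k).ne']

lemma exists_tendsto_and_tendsto_zero_of_add_le {A B s t : ℕ → ℝ} (hA₀ : ∀ k, 0 ≤ A k)
    (hB₀ : ∀ k, 0 ≤ B k) (hs₀ : ∀ k, 0 ≤ s k) (ht₀ : ∀ k, 0 ≤ t k) (hs : Summable s)
    (ht : Summable t) (hAB : ∀ k, A (k + 1) + B k ≤ (1 + s k) * A k + t k) :
    (∃ L, Tendsto A atTop (𝓝 L)) ∧ Tendsto B atTop (𝓝 0) := by
  obtain ⟨L, hL⟩ := exists_tendsto_of_le_one_add_mul_add hA₀ hs₀ ht₀ hs ht fun k =>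
    (le_add_of_nonneg_right (hB₀ k)).trans (hAB k)
  have hgap : Tendsto (fun k => (1 + s k) * A k + t k - A (k + 1)) atTop (𝓝 0) := by
    simpa using (((hs.tendsto_atTop_zero.const_add 1).mul hL).add ht.tendsto_atTop_zero).sub
      (hL.comp (tendsto_add_atTop_nat 1))
  exact ⟨⟨L, hL⟩, squeeze_zero hB₀ (fun k => by linarith [hAB k]) hgap⟩

end RealSequences

section PositiveOperators

variable {H : Type*} [NormedAddCommGroup H] [InnerProductSpace ℝ H] {T U V U' V' : H →L[ℝ] H}

lemma inner_apply_self_le (T : H →L[ℝ] H) (v : H) : ⟪T v, v⟫ ≤ ‖T‖ * ‖v‖ ^ 2 :=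
  calc ⟪T v, v⟫ ≤ ‖T v‖ * ‖v‖ := real_inner_le_norm _ _
    _ ≤ ‖T‖ * ‖v‖ * ‖v‖ := by gcongr; exact T.le_opNorm v
    _ = ‖T‖ * ‖v‖ ^ 2 := by ring

lemma inner_apply_comm (hT : T.IsPositive) (u v : H) : ⟪T u, v⟫ = ⟪T v, u⟫ := by
  rw [hT.inner_left_eq_inner_right, real_inner_comm]

lemma inner_apply_sq_le (hT : T.IsPositive) (u v : H) :
    ⟪T u, v⟫ ^ 2 ≤ ⟪T u, u⟫ * ⟪T v, v⟫ :=
  LinearMap.BilinForm.apply_sq_le_of_symm ((innerₗ H).comp T.toLinearMap) hT.inner_nonneg_left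
    ⟨inner_apply_comm hT⟩ u v

lemma norm_apply_sq_le {C : ℝ} (hT : T.IsPositive) (hC : ∀ w, ⟪T w, w⟫ ≤ C * ‖w‖ ^ 2) (v : H) :
    ‖T v‖ ^ 2 ≤ C * ⟪T v, v⟫ := by
  rcases (sq_nonneg ‖T v‖).eq_or_lt with hzero | hpos
  · have : T v = 0 := by simpa using hzero.symm
    simp [this]
  · refine le_of_mul_le_mul_right ?_ hpos
    calc ‖T v‖ ^ 2 * ‖T v‖ ^ 2 = ⟪T v, T v⟫ ^ 2 := by rw [real_inner_self_eq_norm_sq, sq (_ ^ 2)]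
      _ ≤ ⟪T v, v⟫ * ⟪T (T v), T v⟫ := inner_apply_sq_le hT v (T v)
      _ ≤ ⟪T v, v⟫ * (C * ‖T v‖ ^ 2) := by gcongr; exacts [hT.inner_nonneg_left v, hC _]
      _ = C * ⟪T v, v⟫ * ‖T v‖ ^ 2 := by ring

lemma inner_apply_add_le (hT : T.IsPositive) (u e : H) :
    ⟪T (u + e), u + e⟫ ≤ (1 + ‖e‖) * ⟪T u, u⟫ + ‖T‖ * (‖e‖ + ‖e‖ ^ 2) := by
  have hu := hT.inner_nonneg_left u
  have he := inner_apply_self_le T e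
  have hcross : 2 * ⟪T u, e⟫ ≤ ‖e‖ * ⟪T u, u⟫ + ‖T‖ * ‖e‖ := by
    refine le_of_sq_le_sq ?_ (by positivity)
    calc (2 * ⟪T u, e⟫) ^ 2 = 4 * ⟪T u, e⟫ ^ 2 := by ring
      _ ≤ 4 * (⟪T u, u⟫ * (‖T‖ * ‖e‖ ^ 2)) := by
        gcongr
        exact (inner_apply_sq_le hT u e).trans (mul_le_mul_of_nonneg_left he hu)
      _ ≤ (‖e‖ * ⟪T u, u⟫ + ‖T‖ * ‖e‖) ^ 2 := by
        linarith [sq_nonneg (‖e‖ * ⟪T u, u⟫ - ‖T‖ * ‖e‖)]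
  calc ⟪T (u + e), u + e⟫ = ⟪T u, u⟫ + 2 * ⟪T u, e⟫ + ⟪T e, e⟫ := by
        simp only [map_add, inner_add_left, inner_add_right, inner_apply_comm hT e u]; ring
    _ ≤ (1 + ‖e‖) * ⟪T u, u⟫ + ‖T‖ * (‖e‖ + ‖e‖ ^ 2) := by linarith

lemma isPositive_of_leftInverse (hU : U.IsPositive) (hUV : Function.LeftInverse U V) :
    V.IsPositive := by
  refine (V.isPositive_iff).2 ⟨fun u v => ?_, fun v => ?_⟩
  · have h := hU.inner_left_eq_inner_right (V u) (V v)
    rw [hUV u, hUV v] at h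
    exact h.symm
  · simpa only [hUV v] using hU.inner_nonneg_right (V v)

lemma norm_sq_le_opNorm_mul_inner (hU : U.IsPositive) (hUV : Function.LeftInverse U V) (w : H) :
    ‖w‖ ^ 2 ≤ ‖U‖ * ⟪V w, w⟫ := by
  simpa only [hUV w, real_inner_comm] using norm_apply_sq_le hU (inner_apply_self_le U) (V w)

lemma opNorm_le_inv_of_coercive {α : ℝ} (hα : 0 < α) (hU : ∀ z, α * ‖z‖ ^ 2 ≤ ⟪U z, z⟫)
    (hUV : Function.LeftInverse U V) : ‖V‖ ≤ α⁻¹ := by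
  refine V.opNorm_le_bound (inv_nonneg.2 hα.le) fun w => ?_
  rw [inv_mul_eq_div, le_div_iff₀' hα]
  rcases (norm_nonneg (V w)).eq_or_lt with hzero | hpos
  · simp [← hzero]
  · refine le_of_mul_le_mul_right ?_ hpos
    calc α * ‖V w‖ * ‖V w‖ = α * ‖V w‖ ^ 2 := by ring
      _ ≤ ⟪w, V w⟫ := by simpa only [hUV w] using hU (V w)
      _ ≤ ‖w‖ * ‖V w‖ := real_inner_le_norm _ _

lemma inner_inverse_le_mul {c : ℝ} (hc : 0 ≤ c) (hU : U.IsPositive)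
    (hle : ∀ z, ⟪U z, z⟫ ≤ c * ⟪U' z, z⟫)
    (hUV : Function.LeftInverse U V) (hUV' : Function.LeftInverse U' V') (w : H) :
    ⟪V' w, w⟫ ≤ c * ⟪V w, w⟫ := by
  have hV : 0 ≤ ⟪V w, w⟫ := (isPositive_of_leftInverse hU hUV).inner_nonneg_left w
  rcases le_or_gt ⟪V' w, w⟫ 0 with hneg | hpos
  · exact hneg.trans (mul_nonneg hc hV)
  refine le_of_mul_le_mul_right ?_ hpos
  calc ⟪V' w, w⟫ * ⟪V' w, w⟫ = ⟪U (V w), V' w⟫ ^ 2 := by rw [hUV w, real_inner_comm, sq]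
    _ ≤ ⟪U (V w), V w⟫ * ⟪U (V' w), V' w⟫ := inner_apply_sq_le hU _ _
    _ ≤ ⟪V w, w⟫ * (c * ⟪V' w, w⟫) := by
      rw [hUV w, real_inner_comm]
      have hU' := hle (V' w)
      rw [hUV' w, real_inner_comm _ w] at hU'
      gcongr
    _ = c * ⟪V w, w⟫ * ⟪V' w, w⟫ := by ring

lemma exists_tendsto_apply_of_antitone [CompleteSpace H] {W : ℕ → H →L[ℝ] H} (hW : Antitone W)
    (hpos : ∀ k, (W k).IsPositive) (v : H) : ∃ l, Tendsto (fun k => W k v) atTop (𝓝 l) := by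
  have hanti : ∀ w, Antitone fun k => ⟪W k w, w⟫ := fun w n m hnm => by
    simpa [inner_sub_left] using (show (W n - W m).IsPositive from hW hnm).inner_nonneg_left w
  have hdiff : ∀ n m, n ≤ m →
      ‖W n v - W m v‖ ^ 2 ≤ ‖W 0‖ * (⟪W n v, v⟫ - ⟪W m v, v⟫) := fun n m hnm => by
    rw [← inner_sub_left]
    refine norm_apply_sq_le (hW hnm) (fun w => ?_) v
    calc ⟪(W n - W m) w, w⟫ ≤ ⟪W n w, w⟫ := by
          simpa [inner_sub_left] using (hpos m).inner_nonneg_left w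
      _ ≤ ⟪W 0 w, w⟫ := hanti w (Nat.zero_le n)
      _ ≤ ‖W 0‖ * ‖w‖ ^ 2 := inner_apply_self_le _ _
  have hlim := tendsto_atTop_ciInf (hanti v)
    ⟨0, by rintro _ ⟨k, rfl⟩; exact (hpos k).inner_nonneg_left v⟩
  set L := ⨅ k, ⟪W k v, v⟫
  have hzero : Tendsto (fun n => √(‖W 0‖ * (⟪W n v, v⟫ - L))) atTop (𝓝 0) := by
    simpa using ((hlim.sub_const L).const_mul ‖W 0‖).sqrt
  refine cauchySeq_tendsto_of_complete (cauchySeq_of_le_tendsto_0' _ (fun n m hnm => ?_) hzero)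
  rw [dist_eq_norm]
  refine Real.le_sqrt_of_sq_le ((hdiff n m hnm).trans ?_)
  gcongr
  exact (hanti v).le_of_tendsto hlim m

end PositiveOperators

section WeakConvergence

variable {ι H : Type*} [NormedAddCommGroup H] [InnerProductSpace ℝ H]

/-- Weak convergence of a family in a real Hilbert space along a filter, in the Riesz form: the
inner product with every fixed vector converges. -/
def TendstoWeakly (x : ι → H) (F : Filter ι) (p : H) : Prop :=
  ∀ y, Tendsto (fun k => ⟪x k, y⟫) F (𝓝 ⟪p, y⟫)

variable {F : Filter ι} {x y : ι → H} {p : H}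

lemma exists_tendstoWeakly_of_norm_le [CompleteSpace H] {R : ℝ} (hx : ∀ k, ‖x k‖ ≤ R)
    (F : Ultrafilter ι) : ∃ p, TendstoWeakly x F p := by
  let X : ι → WeakDual ℝ H := fun k => StrongDual.toWeakDual (InnerProductSpace.toDual ℝ H (x k))
  have hX : ∀ k, X k ∈ WeakDual.toStrongDual ⁻¹' Metric.closedBall (0 : StrongDual ℝ H) R :=
    fun k => by simp [X, hx k]
  obtain ⟨φ, -, hφ⟩ := (WeakDual.isCompact_closedBall 0 R).ultrafilter_le_nhds (F.map X)
    (le_principal_iff.2 (Eventually.of_forall (f := (F : Filter ι)) hX))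
  refine ⟨(InnerProductSpace.toDual ℝ H).symm (WeakDual.toStrongDual φ), fun y => ?_⟩
  rw [InnerProductSpace.toDual_symm_apply]
  exact ((WeakDual.eval_continuous y).tendsto φ).comp (show Tendsto X F (𝓝 φ) from hφ)

lemma TendstoWeakly.tendsto_inner {w : ι → H} {l : H} (hx : TendstoWeakly x F p)
    (hbdd : F.IsBoundedUnder (· ≤ ·) (norm ∘ x)) (hw : Tendsto w F (𝓝 l)) :
    Tendsto (fun k => ⟪x k, w k⟫) F (𝓝 ⟪p, l⟫) := by
  have hzero : Tendsto (fun k => ⟪w k - l, x k⟫) F (𝓝 0) :=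
    (tendsto_sub_nhds_zero_iff.2 hw).op_zero_isBoundedUnder_le hbdd _ norm_inner_le_norm
  refine (zero_add ⟪p, l⟫ ▸ hzero.add (hx l)).congr fun k => ?_
  rw [inner_sub_left, real_inner_comm, real_inner_comm (x k) l, sub_add_cancel]

lemma TendstoWeakly.of_tendsto_sub (hx : TendstoWeakly x F p)
    (hxy : Tendsto (fun k => x k - y k) F (𝓝 0)) : TendstoWeakly y F p := fun w => by
  simpa [inner_sub_left] using (hx w).sub (hxy.inner (tendsto_const_nhds (x := w)))

lemma TendstoWeakly.mem [CompleteSpace H] [F.NeBot] {C : Set H} (hC : Convex ℝ C)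
    (hclosed : IsClosed C) (hx : TendstoWeakly x F p) (hmem : ∀ᶠ k in F, x k ∈ C) : p ∈ C := by
  by_contra hp
  obtain ⟨φ, s, hs, hps⟩ := geometric_hahn_banach_closed_point hC hclosed hp
  have hφ : ∀ z, φ z = ⟪z, (InnerProductSpace.toDual ℝ H).symm φ⟫ := fun z => by
    rw [real_inner_comm, InnerProductSpace.toDual_symm_apply]
  refine hps.not_ge (hφ p ▸ le_of_tendsto (hx _) ?_)
  filter_upwards [hmem] with k hk
  exact hφ (x k) ▸ (hs _ hk).le

lemma TendstoWeakly.apply_le [CompleteSpace H] [F.NeBot] {h : H → ℝ} {c : ι → ℝ} {c₀ : ℝ}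
    (hconv : ConvexOn ℝ Set.univ h) (hlsc : LowerSemicontinuous h) (hx : TendstoWeakly x F p)
    (hle : ∀ k, h (x k) ≤ c k) (hc : Tendsto c F (𝓝 c₀)) : h p ≤ c₀ := by
  refine le_of_forall_gt_imp_ge_of_dense fun b hb => ?_
  have hconvex : Convex ℝ {z | h z ≤ b} := by simpa using hconv.convex_le b
  refine TendstoWeakly.mem (C := {z | h z ≤ b}) hconvex (hlsc.isClosed_preimage b) hx ?_
  filter_upwards [hc.eventually_le_const hb] with k hk
  exact (hle k).trans hk

end WeakConvergence

section VariableMetric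

variable {H : Type*} [NormedAddCommGroup H] [InnerProductSpace ℝ H]

/-- A sequence of metrics `(u, v) ↦ ⟪V k u, v⟫` on `H`, uniformly equivalent to the norm and
decreasing up to the summable relative errors `η`. -/
structure IsQuasiAntitoneMetric (V : ℕ → H →L[ℝ] H) (η : ℕ → ℝ) (m M : ℝ) : Prop where
  nonneg : ∀ k, 0 ≤ η k
  summable : Summable η
  pos : 0 < m
  isPositive : ∀ k, (V k).IsPositive
  mul_norm_sq_le : ∀ k w, m * ‖w‖ ^ 2 ≤ ⟪V k w, w⟫
  opNorm_le : ∀ k, ‖V k‖ ≤ M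
  succ_le : ∀ k w, ⟪V (k + 1) w, w⟫ ≤ (1 + η k) * ⟪V k w, w⟫

namespace IsQuasiAntitoneMetric

variable {V : ℕ → H →L[ℝ] H} {η : ℕ → ℝ} {m M : ℝ} {x y : ℕ → H} {z : H}

lemma antitone_inv_growthFactor_smul (hV : IsQuasiAntitoneMetric V η m M) :
    Antitone fun k => (growthFactor η k)⁻¹ • V k := by
  have hpos : ∀ k, 0 ≤ (growthFactor η k)⁻¹ := fun k =>
    inv_nonneg.2 (zero_le_one.trans (one_le_growthFactor hV.nonneg k))
  refine antitone_nat_of_succ_le fun k => (ContinuousLinearMap.isPositive_iff _).2 ⟨?_, fun w => ?_⟩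
  · exact (((hV.isPositive k).smul_of_nonneg (hpos k)).isSymmetric).sub
      ((hV.isPositive (k + 1)).smul_of_nonneg (hpos (k + 1))).isSymmetric
  · have h := div_growthFactor_succ_le (A := fun k => ⟪V k w, w⟫) (t := 0) hV.nonneg
      (fun _ => le_rfl) (fun k => by simpa using hV.succ_le k w) k
    simpa [inner_sub_left, inner_smul_left, div_eq_inv_mul] using h

lemma exists_tendsto_apply [CompleteSpace H] (hV : IsQuasiAntitoneMetric V η m M) (v : H) :
    ∃ l, Tendsto (fun k => V k v) atTop (𝓝 l) := by
  have hpos : ∀ k, 0 < growthFactor η k := fun k =>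
    one_pos.trans_le (one_le_growthFactor hV.nonneg k)
  obtain ⟨q, hq⟩ := exists_tendsto_growthFactor hV.summable
  obtain ⟨l, hl⟩ := exists_tendsto_apply_of_antitone hV.antitone_inv_growthFactor_smul
    (fun k => (hV.isPositive k).smul_of_nonneg (inv_nonneg.2 (hpos k).le)) v
  refine ⟨q • l, (hq.smul hl).congr fun k => ?_⟩
  rw [smul_apply, smul_inv_smul₀ (hpos k).ne']

lemma tendsto_zero_of_tendsto_inner_zero (hV : IsQuasiAntitoneMetric V η m M)
    (hx : Tendsto (fun k => ⟪V k (x k), x k⟫) atTop (𝓝 0)) : Tendsto x atTop (𝓝 0) := by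
  refine tendsto_zero_iff_norm_tendsto_zero.2 (squeeze_zero (fun k => norm_nonneg _)
    (fun k => Real.le_sqrt_of_sq_le ?_) (by simpa using (hx.const_mul m⁻¹).sqrt))
  rw [inv_mul_eq_div, le_div_iff₀' hV.pos]
  exact hV.mul_norm_sq_le k (x k)

lemma exists_norm_le_of_tendsto_inner (hV : IsQuasiAntitoneMetric V η m M) {L : ℝ}
    (hL : Tendsto (fun k => ⟪V k (x k - z), x k - z⟫) atTop (𝓝 L)) : ∃ R, ∀ k, ‖x k‖ ≤ R := by
  obtain ⟨K, hK⟩ := hL.bddAbove_range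
  refine ⟨‖z‖ + √(K / m), fun k => (norm_le_norm_add_norm_sub' _ z).trans ?_⟩
  gcongr
  refine Real.le_sqrt_of_sq_le ?_
  rw [le_div_iff₀' hV.pos]
  exact (hV.mul_norm_sq_le k _).trans (hK ⟨k, rfl⟩)

lemma inner_succ_le (hV : IsQuasiAntitoneMetric V η m M) (k : ℕ) (u v : H) :
    ⟪V (k + 1) v, v⟫ ≤ (1 + η k) *
      ((1 + ‖v - u‖) * ⟪V k u, u⟫ + M * (‖v - u‖ + ‖v - u‖ ^ 2)) := by
  have hη := hV.nonneg k
  have h := inner_apply_add_le (hV.isPositive k) u (v - u)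
  rw [add_sub_cancel] at h
  calc ⟪V (k + 1) v, v⟫ ≤ (1 + η k) * ⟪V k v, v⟫ := hV.succ_le k v
    _ ≤ _ := by
      gcongr
      refine h.trans ?_
      gcongr
      exact hV.opNorm_le k

lemma exists_tendsto_inner_and_tendsto_zero (hV : IsQuasiAntitoneMetric V η m M)
    {B : ℕ → ℝ} (hB₀ : ∀ k, 0 ≤ B k)
    (hdecr : ∀ k, ⟪V k (y k - z), y k - z⟫ ≤ ⟪V k (x k - z), x k - z⟫ - B k)
    (herr : Summable fun k => ‖x (k + 1) - y k‖) :
    (∃ L, Tendsto (fun k => ⟪V k (x k - z), x k - z⟫) atTop (𝓝 L)) ∧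
      Tendsto B atTop (𝓝 0) := by
  set ε : ℕ → ℝ := fun k => ‖x (k + 1) - y k‖
  have hη₀ := hV.nonneg
  have hM : 0 ≤ M := (norm_nonneg _).trans (hV.opNorm_le 0)
  have hε₀ : ∀ k, 0 ≤ ε k := fun k => norm_nonneg _
  have hηε : Summable fun k => η k * ε k := summable_mul_of_nonneg hη₀ hε₀ hV.summable herr
  have hε_sq : Summable fun k => ε k + ε k ^ 2 :=
    herr.add (by simpa only [sq] using summable_mul_of_nonneg hε₀ hε₀ herr herr)
  have hηε_sq : Summable fun k => η k * (ε k + ε k ^ 2) :=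
    summable_mul_of_nonneg hη₀ (fun k => by have := hε₀ k; positivity) hV.summable hε_sq
  refine exists_tendsto_and_tendsto_zero_of_add_le (s := fun k => η k + ε k + η k * ε k)
    (t := fun k => M * (ε k + ε k ^ 2 + η k * (ε k + ε k ^ 2)))
    (fun k => (hV.isPositive k).inner_nonneg_left _) hB₀
    (fun k => by have := hη₀ k; have := hε₀ k; positivity)
    (fun k => by have := hη₀ k; have := hε₀ k; positivity)
    ((hV.summable.add herr).add hηε) ((hε_sq.add hηε_sq).mul_left M) fun k => ?_
  have hηk := hη₀ k
  have hεk := hε₀ k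
  have hstep := hV.inner_succ_le k (y k - z) (x (k + 1) - z)
  rw [sub_sub_sub_cancel_right] at hstep
  have hBk : B k ≤ (1 + η k) * ((1 + ε k) * B k) := by
    rw [← mul_assoc]
    exact le_mul_of_one_le_left (hB₀ k) (by nlinarith)
  calc ⟪V (k + 1) (x (k + 1) - z), x (k + 1) - z⟫ + B k
      ≤ (1 + η k) * ((1 + ε k) * (⟪V k (x k - z), x k - z⟫ - B k)
          + M * (ε k + ε k ^ 2)) + (1 + η k) * ((1 + ε k) * B k) := by
        refine add_le_add (hstep.trans ?_) hBk
        gcongr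
        exact hdecr k
    _ = _ := by ring

lemma exists_tendsto_inner_apply_sub [CompleteSpace H] (hV : IsQuasiAntitoneMetric V η m M)
    {p q : H} {Lp Lq : ℝ} (hp : Tendsto (fun k => ⟪V k (x k - p), x k - p⟫) atTop (𝓝 Lp))
    (hq : Tendsto (fun k => ⟪V k (x k - q), x k - q⟫) atTop (𝓝 Lq)) :
    ∃ c, Tendsto (fun k => ⟪x k, V k (p - q)⟫) atTop (𝓝 c) := by
  obtain ⟨lp, hlp⟩ := hV.exists_tendsto_apply p
  obtain ⟨lq, hlq⟩ := hV.exists_tendsto_apply q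
  refine ⟨_, ((((hlp.inner (tendsto_const_nhds (x := p))).sub
    (hlq.inner (tendsto_const_nhds (x := q)))).sub (hp.sub hq)).const_mul (1 / 2)).congr
      fun k => ?_⟩
  simp only [map_sub, inner_sub_left, inner_sub_right, inner_apply_comm (hV.isPositive k) (x k),
    real_inner_comm _ (x k)]
  ring

lemma eq_of_tendstoWeakly [CompleteSpace H] (hV : IsQuasiAntitoneMetric V η m M)
    {F G : Filter ℕ} [F.NeBot] [G.NeBot] (hF : F ≤ atTop) (hG : G ≤ atTop) {p q : H} {Lp Lq : ℝ}
    (hp : Tendsto (fun k => ⟪V k (x k - p), x k - p⟫) atTop (𝓝 Lp))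
    (hq : Tendsto (fun k => ⟪V k (x k - q), x k - q⟫) atTop (𝓝 Lq))
    (hxp : TendstoWeakly x F p) (hxq : TendstoWeakly x G q) : p = q := by
  obtain ⟨R, hR⟩ := hV.exists_norm_le_of_tendsto_inner hp
  obtain ⟨l, hl⟩ := hV.exists_tendsto_apply (p - q)
  obtain ⟨c, hc⟩ := hV.exists_tendsto_inner_apply_sub hp hq
  have hpl : ⟪p, l⟫ = c := tendsto_nhds_unique
    (hxp.tendsto_inner (isBoundedUnder_of ⟨R, hR⟩) (hl.mono_left hF)) (hc.mono_left hF)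
  have hql : ⟪q, l⟫ = c := tendsto_nhds_unique
    (hxq.tendsto_inner (isBoundedUnder_of ⟨R, hR⟩) (hl.mono_left hG)) (hc.mono_left hG)
  have hzero : ⟪l, p - q⟫ = 0 := by
    rw [real_inner_comm, inner_sub_left, hpl, hql, sub_self]
  have hle : m * ‖p - q‖ ^ 2 ≤ 0 := hzero ▸ ge_of_tendsto'
    (hl.inner tendsto_const_nhds) fun k => hV.mul_norm_sq_le k (p - q)
  have hnorm : ‖p - q‖ ^ 2 ≤ 0 := nonpos_of_mul_nonpos_right hle hV.pos
  exact sub_eq_zero.1 (norm_eq_zero.1 (pow_eq_zero_iff two_ne_zero |>.1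
    (hnorm.antisymm (sq_nonneg _))))

lemma exists_mem_tendstoWeakly [CompleteSpace H] (hV : IsQuasiAntitoneMetric V η m M) {S : Set H}
    (hS : S.Nonempty)
    (hdist : ∀ z ∈ S, ∃ L, Tendsto (fun k => ⟪V k (x k - z), x k - z⟫) atTop (𝓝 L))
    (hcluster : ∀ F : Filter ℕ, F.NeBot → F ≤ atTop → ∀ p R, (∀ k, ‖x k‖ ≤ R) →
      TendstoWeakly x F p → p ∈ S) :
    ∃ p ∈ S, TendstoWeakly x atTop p := by
  obtain ⟨z, hz⟩ := hS
  obtain ⟨L, hL⟩ := hdist z hz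
  obtain ⟨R, hR⟩ := hV.exists_norm_le_of_tendsto_inner hL
  have hF := Ultrafilter.of_le (atTop : Filter ℕ)
  obtain ⟨p, hp⟩ := exists_tendstoWeakly_of_norm_le hR (Ultrafilter.of atTop)
  have hpS := hcluster _ inferInstance hF p R hR hp
  refine ⟨p, hpS, fun w => tendsto_iff_ultrafilter _ _ _ |>.2 fun G hG => ?_⟩
  obtain ⟨q, hq⟩ := exists_tendstoWeakly_of_norm_le hR G
  obtain ⟨Lp, hLp⟩ := hdist p hpS
  obtain ⟨Lq, hLq⟩ := hdist q (hcluster G inferInstance hG q R hR hq)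
  rw [hV.eq_of_tendstoWeakly hF hG hLp hLq hp hq]
  exact hq w

end IsQuasiAntitoneMetric

end VariableMetric

section Subgradients

variable {ι H : Type*} [NormedAddCommGroup H] [InnerProductSpace ℝ H]

/-- `u` is a subgradient of `h` at `z`: the affine function through `(z, h z)` with slope `u`
minorizes `h`. -/
def HasSubgradientAt (h : H → ℝ) (u z : H) : Prop :=
  ∀ w, h z + ⟪u, w - z⟫ ≤ h w

namespace HasSubgradientAt

variable {g h : H → ℝ} {u v y z : H}

lemma inner_sub_nonneg (hz : HasSubgradientAt h u z) (hy : HasSubgradientAt h v y) :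
    0 ≤ ⟪u - v, z - y⟫ := by
  have hzy := hz y
  have hyz := hy z
  rw [← neg_sub, inner_neg_right] at hzy
  rw [inner_sub_left]
  linarith

lemma add (hg : HasSubgradientAt g u z) (hh : HasSubgradientAt h v z) :
    HasSubgradientAt (g + h) (u + v) z := fun w => by
  have := hg w
  have := hh w
  simp only [Pi.add_apply, inner_add_left]
  linarith

lemma smul {c : ℝ} (hc : 0 ≤ c) (hh : HasSubgradientAt h u z) :
    HasSubgradientAt (c • h) (c • u) z := fun w => by
  simpa [inner_smul_left, mul_add] using mul_le_mul_of_nonneg_left (hh w) hc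

lemma of_tendstoWeakly [CompleteSpace H] {F : Filter ι} [F.NeBot] {x s : ι → H}
    (hconv : ConvexOn ℝ Set.univ h) (hlsc : LowerSemicontinuous h)
    (hsub : ∀ k, HasSubgradientAt h (s k) (x k)) (hx : TendstoWeakly x F z)
    (hbdd : F.IsBoundedUnder (· ≤ ·) (norm ∘ x)) (hs : Tendsto s F (𝓝 u)) :
    HasSubgradientAt h u z := fun w => by
  have hlim : Tendsto (fun k => h w - (⟪s k, w⟫ - ⟪x k, s k⟫)) F
      (𝓝 (h w - (⟪u, w⟫ - ⟪z, u⟫))) :=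
    ((hs.inner tendsto_const_nhds).sub (hx.tendsto_inner hbdd hs)).const_sub (h w)
  have hle : h z ≤ h w - (⟪u, w⟫ - ⟪z, u⟫) := hx.apply_le hconv hlsc (fun k => by
    have := hsub k w
    rw [inner_sub_right, real_inner_comm (x k)] at this
    linarith) hlim
  rw [inner_sub_right, real_inner_comm z]
  linarith

end HasSubgradientAt

variable [CompleteSpace H] {f g : H → ℝ} {v z : H}

lemma hasDerivAt_comp_add_smul {d : H} {t : ℝ} (hf : HasGradientAt f v (z + t • d)) :
    HasDerivAt (fun t : ℝ => f (z + t • d)) ⟪v, d⟫ t := by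
  have hline : HasDerivAt (fun t : ℝ => z + t • d) d t := by
    simpa using ((hasDerivAt_id t).smul_const d).const_add z
  have hcomp := hf.hasFDerivAt.comp_hasDerivAt t hline
  rw [InnerProductSpace.toDual_apply_apply] at hcomp
  exact hcomp

lemma hasSubgradientAt_neg_of_forall_add_le_add (hg : ConvexOn ℝ Set.univ g)
    (hf : HasGradientAt f v z) (hz : ∀ y, f z + g z ≤ f y + g y) :
    HasSubgradientAt g (-v) z := fun w => by
  have hderiv : HasDerivAt (fun t : ℝ => f (z + t • (w - z))) ⟪v, w - z⟫ 0 :=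
    hasDerivAt_comp_add_smul (by simpa using hf)
  have hslope := hderiv.tendsto_slope_zero_right
  have hge : g z - g w ≤ ⟪v, w - z⟫ := by
    refine ge_of_tendsto hslope ?_
    filter_upwards [Ioo_mem_nhdsGT one_pos] with t ht
    have hmin := hz (z + t • (w - z))
    have hconv := hg.2 (Set.mem_univ z) (Set.mem_univ w) (sub_nonneg.2 ht.2.le) ht.1.le
      (sub_add_cancel 1 t)
    rw [show (1 - t) • z + t • w = z + t • (w - z) by module] at hconv
    simp only [smul_eq_mul] at hconv
    rw [zero_add, zero_smul, add_zero, smul_eq_mul, inv_mul_eq_div, le_div_iff₀ ht.1]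
    linarith
  rw [inner_neg_left]
  linarith

lemma hasSubgradientAt_of_hasGradientAt (hconv : ConvexOn ℝ Set.univ f)
    (hf : HasGradientAt f v z) : HasSubgradientAt f v z := by
  have hneg : HasGradientAt (fun w => -f w) (-v) z :=
    hasGradientAt_iff_hasFDerivAt.2 (by simpa using hf.hasFDerivAt.fun_neg)
  simpa using hasSubgradientAt_neg_of_forall_add_le_add hconv hneg fun y => by simp

end Subgradients

section Cocoercivity

variable {H : Type*} [NormedAddCommGroup H] [InnerProductSpace ℝ H]

/-- `B` is `β`-cocoercive, i.e. `β • B` is firmly nonexpansive. -/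
def IsCocoercive (β : ℝ) (B : H → H) : Prop :=
  ∀ x y, β * ‖B x - B y‖ ^ 2 ≤ ⟪B x - B y, x - y⟫

variable {β : ℝ}

lemma IsCocoercive.neg_norm_sq_le_inner {B : H → H} (hβ : 0 < β) (hB : IsCocoercive β B)
    (x y z : H) : -(1 / (4 * β) * ‖x - y‖ ^ 2) ≤ ⟪B x - B z, y - z⟫ := by
  have hxz := hB x z
  have hcs : ⟪B x - B z, x - y⟫ ≤ ‖B x - B z‖ * ‖x - y‖ := real_inner_le_norm _ _
  have hsplit : ⟪B x - B z, y - z⟫ = ⟪B x - B z, x - z⟫ - ⟪B x - B z, x - y⟫ := by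
    rw [← inner_sub_right, sub_sub_sub_cancel_left]
  have hyoung : ‖B x - B z‖ * ‖x - y‖ ≤ β * ‖B x - B z‖ ^ 2 + 1 / (4 * β) * ‖x - y‖ ^ 2 := by
    have hsq : 0 ≤ 1 / (4 * β) * (2 * β * ‖B x - B z‖ - ‖x - y‖) ^ 2 := by positivity
    have hexpand : 1 / (4 * β) * (2 * β * ‖B x - B z‖ - ‖x - y‖) ^ 2 =
        β * ‖B x - B z‖ ^ 2 - ‖B x - B z‖ * ‖x - y‖ + 1 / (4 * β) * ‖x - y‖ ^ 2 := by
      field_simp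
      ring
    linarith
  linarith

variable [CompleteSpace H] {f : H → ℝ} {f' : H → H}

lemma le_add_inner_add_norm_sq_of_lipschitz {L : ℝ} (hf : ∀ z, HasGradientAt f (f' z) z)
    (hlip : ∀ z w, ‖f' z - f' w‖ ≤ L * ‖z - w‖) (x d : H) :
    f (x + d) ≤ f x + ⟪f' x, d⟫ + L / 2 * ‖d‖ ^ 2 := by
  let gap : ℝ → ℝ := fun t => f (x + t • d) - (t * ⟪f' x, d⟫ + t ^ 2 * (L / 2 * ‖d‖ ^ 2))
  have hderiv : ∀ t, HasDerivAt gap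
      (⟪f' (x + t • d), d⟫ - (1 * ⟪f' x, d⟫ + 2 * t * (L / 2 * ‖d‖ ^ 2))) t := fun t =>
    (hasDerivAt_comp_add_smul (hf _)).sub (((hasDerivAt_id t).mul_const _).add
      (HasDerivAt.mul_const (by simpa using hasDerivAt_pow 2 t) _))
  have hanti : AntitoneOn gap (Set.Icc 0 1) := by
    refine antitoneOn_of_deriv_nonpos (convex_Icc 0 1)
      (fun t _ => (hderiv t).continuousAt.continuousWithinAt)
      (fun t _ => (hderiv t).differentiableAt.differentiableWithinAt) fun t ht => ?_
    have ht₀ : 0 ≤ t := (interior_subset ht).1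
    have hbound : ⟪f' (x + t • d) - f' x, d⟫ ≤ 2 * t * (L / 2 * ‖d‖ ^ 2) :=
      calc ⟪f' (x + t • d) - f' x, d⟫ ≤ ‖f' (x + t • d) - f' x‖ * ‖d‖ := real_inner_le_norm _ _
        _ ≤ L * ‖x + t • d - x‖ * ‖d‖ := by gcongr; exact hlip _ _
        _ = 2 * t * (L / 2 * ‖d‖ ^ 2) := by
          rw [add_sub_cancel_left, norm_smul, Real.norm_of_nonneg ht₀]; ring
    rw [inner_sub_left] at hbound
    rw [(hderiv t).deriv]
    linarith
  have hle : gap 1 ≤ gap 0 := hanti (by simp) (by simp) zero_le_one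
  simp only [gap, one_smul, zero_smul, add_zero] at hle
  linarith

lemma add_inner_add_norm_sq_le_of_lipschitz (hβ : 0 < β) (hconv : ConvexOn ℝ Set.univ f)
    (hf : ∀ z, HasGradientAt f (f' z) z) (hlip : ∀ z w, ‖f' z - f' w‖ ≤ 1 / β * ‖z - w‖)
    (x y : H) : f x + ⟪f' x, y - x⟫ + β / 2 * ‖f' y - f' x‖ ^ 2 ≤ f y := by
  set d := f' y - f' x with hd
  have hdescent := le_add_inner_add_norm_sq_of_lipschitz hf hlip y (-(β • d))
  have hsub := hasSubgradientAt_of_hasGradientAt hconv (hf x) (y + -(β • d))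
  rw [show y + -(β • d) - x = (y - x) - β • d by abel, inner_sub_right, inner_smul_right] at hsub
  rw [inner_neg_right, inner_smul_right, norm_neg, norm_smul, Real.norm_of_nonneg hβ.le] at hdescent
  have hnorm : β * ⟪f' y, d⟫ - β * ⟪f' x, d⟫ = β * ‖d‖ ^ 2 := by
    rw [← mul_sub, ← inner_sub_left, ← hd, real_inner_self_eq_norm_sq]
  have hscale : 1 / β / 2 * (β * ‖d‖) ^ 2 = β / 2 * ‖d‖ ^ 2 := by field_simp
  linarith

theorem isCocoercive_of_lipschitz_gradient (hβ : 0 < β) (hconv : ConvexOn ℝ Set.univ f)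
    (hf : ∀ z, HasGradientAt f (f' z) z) (hlip : ∀ z w, ‖f' z - f' w‖ ≤ 1 / β * ‖z - w‖) :
    IsCocoercive β f' := fun x y => by
  have hxy := add_inner_add_norm_sq_le_of_lipschitz hβ hconv hf hlip x y
  have hyx := add_inner_add_norm_sq_le_of_lipschitz hβ hconv hf hlip y x
  rw [norm_sub_rev, ← neg_sub x y, inner_neg_right] at hxy
  rw [inner_sub_left]
  linarith

end Cocoercivity

section ForwardBackward

variable {H : Type*} [NormedAddCommGroup H] [InnerProductSpace ℝ H]

/-- `P` is the proximity operator of `γ • g` for the metric `⟪V ·, ·⟫`, encoded by its variational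
inequality instead of by the minimization of `w ↦ γ * g w + ⟪V (w - y), w - y⟫ / 2`. -/
def IsProx (V : H →L[ℝ] H) (γ : ℝ) (g : H → ℝ) (P : H → H) : Prop :=
  ∀ y, HasSubgradientAt (γ • g) (V (y - P y)) (P y)

section Step

variable {U V : H →L[ℝ] H} {β γ : ℝ} {g : H → ℝ} {B P : H → H} {x y z : H}

lemma IsProx.hasSubgradientAt (hP : IsProx V γ g P) (hγ : 0 < γ)
    (hVU : Function.LeftInverse V U) (x c : H) :
    HasSubgradientAt g (γ⁻¹ • V (x - P (x - γ • U c)) - c) (P (x - γ • U c)) := by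
  have h := (hP (x - γ • U c)).smul (inv_nonneg.2 hγ.le)
  rw [inv_smul_smul₀ hγ.ne'] at h
  convert h using 1
  rw [sub_right_comm, map_sub V _ (γ • U c), map_smul, hVU c, smul_sub, inv_smul_smul₀ hγ.ne']

lemma IsProx.norm_sub_le (hP : IsProx V γ g P) (hγ : 0 < γ) (hU : U.IsPositive)
    (hUV : Function.LeftInverse U V) (hVU : Function.LeftInverse V U) (x b c : H) :
    ‖P (x - γ • U (c + b)) - P (x - γ • U c)‖ ≤ γ * ‖U‖ * ‖b‖ := by
  have hmono := (hP.hasSubgradientAt hγ hVU x (c + b)).inner_sub_nonneg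
    (hP.hasSubgradientAt hγ hVU x c)
  set p := P (x - γ • U (c + b))
  set q := P (x - γ • U c)
  have hdiff : γ⁻¹ • V (x - p) - (c + b) - (γ⁻¹ • V (x - q) - c) = -(γ⁻¹ • V (p - q) + b) := by
    simp only [map_sub]
    module
  rw [hdiff, inner_neg_left, inner_add_left, inner_smul_left, conj_trivial, inv_mul_eq_div] at hmono
  have hcs : -⟪b, p - q⟫ ≤ ‖b‖ * ‖p - q‖ := (neg_le_abs _).trans (abs_real_inner_le_norm _ _)
  have hinner : ⟪V (p - q), p - q⟫ ≤ γ * (‖b‖ * ‖p - q‖) := by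
    rw [← div_le_iff₀' hγ]
    linarith
  have hsq : ‖p - q‖ * ‖p - q‖ ≤ γ * ‖U‖ * ‖b‖ * ‖p - q‖ :=
    calc ‖p - q‖ * ‖p - q‖ = ‖p - q‖ ^ 2 := (sq _).symm
      _ ≤ ‖U‖ * ⟪V (p - q), p - q⟫ := norm_sq_le_opNorm_mul_inner hU hUV _
      _ ≤ ‖U‖ * (γ * (‖b‖ * ‖p - q‖)) := by gcongr
      _ = γ * ‖U‖ * ‖b‖ * ‖p - q‖ := by ring
  rcases (norm_nonneg (p - q)).eq_or_lt with hzero | hpos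
  · rw [← hzero]
    positivity
  · exact le_of_mul_le_mul_right hsq hpos

lemma norm_inexact_step_sub_exact_step_le (hP : IsProx V γ g P) (hγ : 0 < γ) (hU : U.IsPositive)
    (hUV : Function.LeftInverse U V) (hVU : Function.LeftInverse V U) {lam : ℝ} (hlam : 0 ≤ lam)
    (x a b c : H) :
    ‖x + lam • (P (x - γ • U (c + b)) + a - x) - (x + lam • (P (x - γ • U c) - x))‖ ≤
      lam * ‖a‖ + γ * ‖U‖ * (lam * ‖b‖) := by
  set p := P (x - γ • U (c + b))
  set q := P (x - γ • U c)
  calc ‖x + lam • (p + a - x) - (x + lam • (q - x))‖ = lam * ‖a + (p - q)‖ := by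
        rw [← Real.norm_of_nonneg hlam, ← norm_smul, Real.norm_of_nonneg hlam]
        congr 1
        module
    _ ≤ lam * (‖a‖ + γ * ‖U‖ * ‖b‖) := by
        gcongr
        exact norm_add_le_of_le le_rfl (hP.norm_sub_le hγ hU hUV hVU x b c)
    _ = lam * ‖a‖ + γ * ‖U‖ * (lam * ‖b‖) := by ring

lemma neg_mul_inner_le_inner_of_hasSubgradientAt (hβ : 0 < β) (hγ : 0 < γ) (hU : U.IsPositive)
    (hUV : Function.LeftInverse U V) (hB : IsCocoercive β B)
    (hy : HasSubgradientAt g (γ⁻¹ • V (x - y) - B x) y) (hz : HasSubgradientAt g (-B z) z) :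
    -(γ * ‖U‖ / (4 * β) * ⟪V (x - y), x - y⟫) ≤ ⟪V (x - y), y - z⟫ := by
  have hmono : ⟪B x - B z, y - z⟫ ≤ γ⁻¹ * ⟪V (x - y), y - z⟫ := by
    have := hy.inner_sub_nonneg hz
    rw [show γ⁻¹ • V (x - y) - B x - -B z = γ⁻¹ • V (x - y) - (B x - B z) by abel,
      inner_sub_left, inner_smul_left, conj_trivial] at this
    linarith
  have hnorm := norm_sq_le_opNorm_mul_inner hU hUV (x - y)
  calc -(γ * ‖U‖ / (4 * β) * ⟪V (x - y), x - y⟫)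
      = γ * -(1 / (4 * β) * (‖U‖ * ⟪V (x - y), x - y⟫)) := by ring
    _ ≤ γ * -(1 / (4 * β) * ‖x - y‖ ^ 2) := by gcongr
    _ ≤ γ * (γ⁻¹ * ⟪V (x - y), y - z⟫) := by
      gcongr
      exact (hB.neg_norm_sq_le_inner hβ x y z).trans hmono
    _ = ⟪V (x - y), y - z⟫ := mul_inv_cancel_left₀ hγ.ne' _

lemma inner_apply_relaxation (hV : V.IsPositive) (lam : ℝ) (x y z : H) :
    ⟪V (x + lam • (y - x) - z), x + lam • (y - x) - z⟫ = ⟪V (x - z), x - z⟫ -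
      (lam * (2 - lam) * ⟪V (x - y), x - y⟫ + 2 * lam * ⟪V (x - y), y - z⟫) := by
  rw [show x + lam • (y - x) - z = (1 - lam) • (x - y) + (y - z) by module,
    ← sub_add_sub_cancel x y z]
  simp only [map_add, map_smul, inner_add_left, inner_add_right, inner_smul_left, inner_smul_right,
    conj_trivial, inner_apply_comm hV (y - z) (x - y)]
  ring

lemma inner_apply_relaxation_le (hβ : 0 < β) (hγ : 0 < γ) (hU : U.IsPositive)
    (hUV : Function.LeftInverse U V) (hB : IsCocoercive β B)
    (hy : HasSubgradientAt g (γ⁻¹ • V (x - y) - B x) y) (hz : HasSubgradientAt g (-B z) z)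
    {lam : ℝ} (hlam : 0 ≤ lam) :
    ⟪V (x + lam • (y - x) - z), x + lam • (y - x) - z⟫ ≤ ⟪V (x - z), x - z⟫ -
      lam * ((4 * β - γ * ‖U‖) / (2 * β) - lam) * ⟪V (x - y), x - y⟫ := by
  rw [inner_apply_relaxation (isPositive_of_leftInverse hU hUV)]
  have hcross := mul_le_mul_of_nonneg_left
    (neg_mul_inner_le_inner_of_hasSubgradientAt hβ hγ hU hUV hB hy hz)
    (mul_nonneg zero_le_two hlam)
  have hcoeff : lam * ((4 * β - γ * ‖U‖) / (2 * β) - lam) =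
      lam * (2 - lam) - 2 * lam * (γ * ‖U‖ / (4 * β)) := by
    field_simp
    ring
  rw [hcoeff]
  linarith

end Step

section Sequence

variable {U V : ℕ → H →L[ℝ] H} {η γ lam : ℕ → ℝ} {m M α β μ lamlb τ γlb : ℝ} {g : H → ℝ}
  {B : H → H} {x y : ℕ → H} {z : H}

lemma isQuasiAntitoneMetric_of_leftInverse (hα : 0 < α) (hμ : 0 < μ) (hU : ∀ k, (U k).IsPositive)
    (hcoercive : ∀ k z, α * ‖z‖ ^ 2 ≤ ⟪U k z, z⟫) (hUμ : ∀ k, ‖U k‖ ≤ μ)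
    (hUV : ∀ k, Function.LeftInverse (U k) (V k)) (hη₀ : ∀ k, 0 ≤ η k) (hη : Summable η)
    (hmono : ∀ k z, ⟪U k z, z⟫ ≤ (1 + η k) * ⟪U (k + 1) z, z⟫) :
    IsQuasiAntitoneMetric V η μ⁻¹ α⁻¹ where
  nonneg := hη₀
  summable := hη
  pos := inv_pos.2 hμ
  isPositive k := isPositive_of_leftInverse (hU k) (hUV k)
  mul_norm_sq_le k w := by
    have hVw := (isPositive_of_leftInverse (hU k) (hUV k)).inner_nonneg_left w
    rw [inv_mul_le_iff₀ hμ]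
    exact (norm_sq_le_opNorm_mul_inner (hU k) (hUV k) w).trans
      (mul_le_mul_of_nonneg_right (hUμ k) hVw)
  opNorm_le k := opNorm_le_inv_of_coercive hα (hcoercive k) (hUV k)
  succ_le k := inner_inverse_le_mul (add_nonneg zero_le_one (hη₀ k)) (hU k) (hmono k) (hUV k)
    (hUV (k + 1))

lemma exists_tendsto_inner_and_tendsto_sub_zero (hV : IsQuasiAntitoneMetric V η m M) (hβ : 0 < β)
    (hγ : ∀ k, 0 < γ k) (hU : ∀ k, (U k).IsPositive) (hUV : ∀ k, Function.LeftInverse (U k) (V k))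
    (hlamlb : 0 < lamlb) (hτ : 0 < τ) (hlam : ∀ k, lamlb ≤ lam k)
    (hlam' : ∀ k, lam k ≤ (4 * β - γ k * ‖U k‖) / (2 * β) - τ) (hB : IsCocoercive β B)
    (hy : ∀ k, HasSubgradientAt g ((γ k)⁻¹ • V k (x k - y k) - B (x k)) (y k))
    (herr : Summable fun k => ‖x (k + 1) - (x k + lam k • (y k - x k))‖)
    (hz : HasSubgradientAt g (-B z) z) :
    (∃ L, Tendsto (fun k => ⟪V k (x k - z), x k - z⟫) atTop (𝓝 L)) ∧
      Tendsto (fun k => x k - y k) atTop (𝓝 0) := by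
  have hinner : ∀ k, 0 ≤ ⟪V k (x k - y k), x k - y k⟫ := fun k =>
    (hV.isPositive k).inner_nonneg_left _
  have hlam₀ : ∀ k, 0 ≤ lam k := fun k => hlamlb.le.trans (hlam k)
  obtain ⟨hdist, hzero⟩ := hV.exists_tendsto_inner_and_tendsto_zero (z := z)
    (B := fun k => lamlb * τ * ⟪V k (x k - y k), x k - y k⟫)
    (fun k => mul_nonneg (by positivity) (hinner k)) (fun k => by
      have hcoeff : lamlb * τ ≤ lam k * ((4 * β - γ k * ‖U k‖) / (2 * β) - lam k) :=
        mul_le_mul (hlam k) (by linarith [hlam' k]) hτ.le (hlam₀ k)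
      exact (inner_apply_relaxation_le hβ (hγ k) (hU k) (hUV k) hB (hy k) hz (hlam₀ k)).trans
        (sub_le_sub_left (mul_le_mul_of_nonneg_right hcoeff (hinner k)) _)) herr
  refine ⟨hdist, hV.tendsto_zero_of_tendsto_inner_zero ?_⟩
  simpa only [inv_mul_cancel_left₀ (mul_pos hlamlb hτ).ne', mul_zero] using
    hzero.const_mul (lamlb * τ)⁻¹

lemma summable_norm_inexact_step_sub_exact_step {C : ℝ} {P : ℕ → H → H} {a b : ℕ → H}
    (hP : ∀ k, IsProx (V k) (γ k) g (P k)) (hγ : ∀ k, 0 < γ k) (hU : ∀ k, (U k).IsPositive)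
    (hUV : ∀ k, Function.LeftInverse (U k) (V k)) (hVU : ∀ k, Function.LeftInverse (V k) (U k))
    (hγU : ∀ k, γ k * ‖U k‖ ≤ C) (hlam : ∀ k, 0 ≤ lam k) (ha : Summable fun k => lam k * ‖a k‖)
    (hb : Summable fun k => lam k * ‖b k‖)
    (hx : ∀ k, x (k + 1) =
      x k + lam k • (P k (x k - γ k • U k (B (x k) + b k)) + a k - x k)) :
    Summable fun k => ‖x (k + 1) - (x k + lam k • (P k (x k - γ k • U k (B (x k))) - x k))‖ := by
  refine .of_nonneg_of_le (fun k => norm_nonneg _) (fun k => ?_) (ha.add (hb.mul_left C))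
  rw [hx k]
  refine (norm_inexact_step_sub_exact_step_le (hP k) (hγ k) (hU k) (hUV k) (hVU k) (hlam k)
    _ _ _ _).trans (add_le_add_right (mul_le_mul_of_nonneg_right (hγU k) ?_) _)
  exact mul_nonneg (hlam k) (norm_nonneg _)

lemma tendsto_residual_zero {L : ℝ} (hV : ∀ k, ‖V k‖ ≤ M) (hγlb : 0 < γlb) (hγ : ∀ k, γlb ≤ γ k)
    (hB : ∀ u v, ‖B u - B v‖ ≤ L * ‖u - v‖) (hxy : Tendsto (fun k => x k - y k) atTop (𝓝 0)) :
    Tendsto (fun k => B (y k) + ((γ k)⁻¹ • V k (x k - y k) - B (x k))) atTop (𝓝 0) := by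
  have hbound : Tendsto (fun k => L * ‖x k - y k‖ + γlb⁻¹ * (M * ‖x k - y k‖)) atTop (𝓝 0) := by
    simpa using (hxy.norm.const_mul L).add ((hxy.norm.const_mul M).const_mul γlb⁻¹)
  refine squeeze_zero_norm (fun k => ?_) hbound
  have hγk : 0 < γ k := hγlb.trans_le (hγ k)
  calc ‖B (y k) + ((γ k)⁻¹ • V k (x k - y k) - B (x k))‖
      = ‖B (y k) - B (x k) + (γ k)⁻¹ • V k (x k - y k)‖ := by congr 1; abel
    _ ≤ ‖B (y k) - B (x k)‖ + ‖(γ k)⁻¹ • V k (x k - y k)‖ := norm_add_le _ _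
    _ ≤ L * ‖x k - y k‖ + γlb⁻¹ * (M * ‖x k - y k‖) := by
      rw [norm_smul, Real.norm_of_nonneg (inv_nonneg.2 hγk.le)]
      refine add_le_add (norm_sub_rev (x k) (y k) ▸ hB _ _) ?_
      gcongr
      · exact hγ k
      · exact (V k).le_of_opNorm_le (hV k) _

lemma forall_add_le_add_of_tendstoWeakly [CompleteSpace H] {ι : Type*} {F : Filter ι} [F.NeBot]
    {f : H → ℝ} {f' : H → H} (hfconv : ConvexOn ℝ Set.univ f)
    (hfgrad : ∀ z, HasGradientAt f (f' z) z) (hgconv : ConvexOn ℝ Set.univ g)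
    (hglsc : LowerSemicontinuous g) {x y s : ι → H} {p : H} {R : ℝ}
    (hs : ∀ k, HasSubgradientAt g (s k) (y k)) (hR : ∀ k, ‖x k‖ ≤ R) (hx : TendstoWeakly x F p)
    (hxy : Tendsto (fun k => x k - y k) F (𝓝 0))
    (hzero : Tendsto (fun k => f' (y k) + s k) F (𝓝 0)) (w : H) : f p + g p ≤ f w + g w := by
  have hlsc : LowerSemicontinuous (f + g) :=
    (continuous_iff_continuousAt.2 fun z => (hfgrad z).continuousAt).lowerSemicontinuous.add hglsc
  have hbdd : F.IsBoundedUnder (· ≤ ·) (norm ∘ y) :=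
    (hxy.norm.const_add R).isBoundedUnder_le.mono_le (.of_forall fun k =>
      (norm_le_norm_add_norm_sub (x k) (y k)).trans (add_le_add_left (hR k) _))
  have hsub : HasSubgradientAt (f + g) 0 p := .of_tendstoWeakly (hfconv.add hgconv) hlsc
    (fun k => (hasSubgradientAt_of_hasGradientAt hfconv (hfgrad (y k))).add (hs k))
    (hx.of_tendsto_sub hxy) hbdd hzero
  simpa using hsub w

end Sequence

end ForwardBackward

theorem variable_metric_proximal_gradient_weak_convergence_general
    {H : Type*} [NormedAddCommGroup H] [InnerProductSpace ℝ H] [CompleteSpace H]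
    {β : ℝ} (hβ : 0 < β) {f : H → ℝ} {f' : H → H} (hfconv : ConvexOn ℝ Set.univ f)
    (hfgrad : ∀ z, HasGradientAt f (f' z) z) (hflip : ∀ z w, ‖f' z - f' w‖ ≤ 1 / β * ‖z - w‖)
    {g : H → ℝ} (hgconv : ConvexOn ℝ Set.univ g) (hglsc : LowerSemicontinuous g)
    (hΩ : {z | ∀ y, f z + g z ≤ f y + g y}.Nonempty)
    {α : ℝ} (hα : 0 < α) {U V : ℕ → H →L[ℝ] H} (hU : ∀ k, IsSelfAdjoint (U k))
    (hUpos : ∀ k z, α * ‖z‖ ^ 2 ≤ ⟪U k z, z⟫)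
    (hVU : ∀ k, (V k).comp (U k) = ContinuousLinearMap.id ℝ H)
    (hUV : ∀ k, (U k).comp (V k) = ContinuousLinearMap.id ℝ H)
    {η : ℕ → ℝ} (hη₀ : ∀ k, 0 ≤ η k) (hη : Summable η)
    (hUmono : ∀ k z, ⟪U k z, z⟫ ≤ (1 + η k) * ⟪U (k + 1) z, z⟫)
    {γ lam : ℕ → ℝ} {lamlb τ γlb : ℝ} (hlamlb : 0 < lamlb) (hτ : 0 < τ) (hγlb : 0 < γlb)
    (hγ : ∀ k, γlb ≤ γ k) (hlam : ∀ k, lamlb ≤ lam k)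
    (hlam' : ∀ k, lam k ≤ (4 * β - γ k * ‖U k‖) / (2 * β) - τ)
    {a b : ℕ → H} (ha : Summable fun k => lam k * ‖a k‖) (hb : Summable fun k => lam k * ‖b k‖)
    {P : ℕ → H → H} (hP : ∀ k, IsProx (V k) (γ k) g (P k)) {x : ℕ → H}
    (hx : ∀ k, x (k + 1) =
      x k + lam k • (P k (x k - γ k • U k (f' (x k) + b k)) + a k - x k)) :
    ∃ p ∈ {z | ∀ y, f z + g z ≤ f y + g y}, TendstoWeakly x atTop p := by
  have hγ₀ : ∀ k, 0 < γ k := fun k => hγlb.trans_le (hγ k)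
  have hUV' : ∀ k, Function.LeftInverse (U k) (V k) := fun k => DFunLike.congr_fun (hUV k)
  have hVU' : ∀ k, Function.LeftInverse (V k) (U k) := fun k => DFunLike.congr_fun (hVU k)
  have hU' : ∀ k, (U k).IsPositive := fun k => (U k).isPositive_iff'.2
    ⟨hU k, fun z => (by positivity : 0 ≤ α * ‖z‖ ^ 2).trans (hUpos k z)⟩
  have hγU : ∀ k, γ k * ‖U k‖ ≤ 4 * β := fun k => by
    have : 0 < (4 * β - γ k * ‖U k‖) / (2 * β) := by linarith [hlam k, hlam' k]
    linarith [(div_pos_iff_of_pos_right (by positivity)).1 this]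
  have hV : IsQuasiAntitoneMetric V η (4 * β / γlb)⁻¹ α⁻¹ :=
    isQuasiAntitoneMetric_of_leftInverse hα (by positivity) hU' hUpos (fun k =>
      (le_div_iff₀' hγlb).2 ((mul_le_mul_of_nonneg_right (hγ k) (norm_nonneg _)).trans (hγU k)))
      hUV' hη₀ hη hUmono
  let y : ℕ → H := fun k => P k (x k - γ k • U k (f' (x k)))
  have hy : ∀ k, HasSubgradientAt g ((γ k)⁻¹ • V k (x k - y k) - f' (x k)) (y k) := fun k =>
    (hP k).hasSubgradientAt (hγ₀ k) (hVU' k) _ _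
  have hcoco := isCocoercive_of_lipschitz_gradient hβ hfconv hfgrad hflip
  have herr := summable_norm_inexact_step_sub_exact_step hP hγ₀ hU' hUV' hVU' hγU
    (fun k => hlamlb.le.trans (hlam k)) ha hb hx
  have hmin : ∀ z ∈ {z | ∀ y, f z + g z ≤ f y + g y},
      (∃ L, Tendsto (fun k => ⟪V k (x k - z), x k - z⟫) atTop (𝓝 L)) ∧
        Tendsto (fun k => x k - y k) atTop (𝓝 0) := fun z hz =>
    exists_tendsto_inner_and_tendsto_sub_zero hV hβ hγ₀ hU' hUV' hlamlb hτ hlam hlam' hcoco hy herr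
      (hasSubgradientAt_neg_of_forall_add_le_add hgconv (hfgrad z) hz)
  obtain ⟨-, hxy⟩ := hmin _ hΩ.some_mem
  exact hV.exists_mem_tendstoWeakly hΩ (fun z hz => (hmin z hz).1) fun F _ hF p R hR hp =>
    forall_add_le_add_of_tendstoWeakly hfconv hfgrad hgconv hglsc hy hR hp (hxy.mono_left hF)
      ((tendsto_residual_zero hV.opNorm_le hγlb hγ hflip hxy).mono_left hF)

/-- weak convergence of the variable metric forward-backward (proximal
gradient) algorithm for minimizing `f + g`, `f` convex differentiable with
`(1/β)`-Lipschitz gradient, `g` convex lower semicontinuous. -/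
theorem variable_metric_proximal_gradient_weak_convergence
    {H : Type*} [NormedAddCommGroup H] [InnerProductSpace ℝ H] [CompleteSpace H]
    (β : ℝ) (hβ : 0 < β)
    (f : H → ℝ) (f' : H → H)
    (hfconv : ConvexOn ℝ Set.univ f)
    (hfgrad : ∀ z : H, HasGradientAt f (f' z) z)
    (hflip : ∀ z w : H, ‖f' z - f' w‖ ≤ (1 / β) * ‖z - w‖)
    (g : H → ℝ)
    (hgconv : ConvexOn ℝ Set.univ g)
    (hglsc : LowerSemicontinuous g)
    (hΩ : {z : H | ∀ y : H, f z + g z ≤ f y + g y}.Nonempty)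
    (α : ℝ) (hα : 0 < α) (μ : ℝ) (hμ : 0 < μ)
    (U V : ℕ → H →L[ℝ] H)
    (hU : ∀ k, IsSelfAdjoint (U k))
    (hUpos : ∀ k, ∀ z : H, ⟪U k z, z⟫ ≥ α * ‖z‖ ^ 2)
    (hV : ∀ k, IsSelfAdjoint (V k))
    (hVU : ∀ k, (V k).comp (U k) = ContinuousLinearMap.id ℝ H)
    (hUV : ∀ k, (U k).comp (V k) = ContinuousLinearMap.id ℝ H)
    (hUnorm : ∀ k, ‖U k‖ ≤ μ)
    (η : ℕ → ℝ) (hη0 : ∀ k, 0 ≤ η k) (hηsum : Summable η)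
    (hUmono : ∀ k, ∀ z : H, (1 + η k) * ⟪U (k + 1) z, z⟫ ≥ ⟪U k z, z⟫)
    (γ lam αk : ℕ → ℝ)
    (hγ : ∀ k, 0 < γ k ∧ γ k < 2 * β / ‖U k‖)
    (hαk : ∀ k, αk k = 2 * β / (4 * β - γ k * ‖U k‖))
    (hlam : ∀ k, 0 < lam k ∧ lam k < 1 / αk k)
    (lamlb τ γlb : ℝ) (hlamlb : 0 < lamlb) (hτ : 0 < τ) (hγlb : 0 < γlb)
    (hlam' : ∀ k, lamlb ≤ lam k ∧ lam k ≤ 1 / αk k - τ)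
    (hγ' : ∀ k, γlb ≤ γ k)
    (a b : ℕ → H)
    (ha : Summable (fun k => lam k * ‖a k‖))
    (hb : Summable (fun k => lam k * ‖b k‖))
    (P : ℕ → H → H)
    (hP : ∀ k, ∀ y z : H,
      γ k * g z ≥ γ k * g (P k y) + ⟪V k (y - P k y), z - P k y⟫)
    (x : ℕ → H)
    (hx : ∀ k, x (k + 1) =
      x k + lam k • (P k (x k - γ k • U k (f' (x k) + b k)) + a k - x k)) :
    ∃ p ∈ {z : H | ∀ y : H, f z + g z ≤ f y + g y},
      ∀ y : H, Tendsto (fun k => ⟪x k, y⟫) atTop (nhds ⟪p, y⟫) :=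
  variable_metric_proximal_gradient_weak_convergence_general hβ hfconv hfgrad hflip hgconv
    hglsc hΩ hα hU hUpos hVU hUV hη0 hηsum hUmono hlamlb hτ hγlb hγ' (fun k => (hlam' k).1)
    (fun k => by simpa only [hαk, one_div_div] using (hlam' k).2) ha hb hP hx
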